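/- Completeness of potentials and anti-potentials for differential cost analysis: let T_new and T_old be two terminating transition systems sharing an input type X, input set Θ₀, and initial-state maps ι_new, ι_old. Assume that for every state reachable in T_new the set of run costs from that state is bounded above, and that for every state reachable in T_old the set of run costs from that state is bounded below. If t ∈ ℝ is a threshold for the DiffCost problem, then there exist a potential function φ_new for T_new and an anti-potential function χ_old for T_old such that φ_new(ι_new x) − χ_old(ι_old x) ≤ t for every x ∈ Θ₀. -/

import Mathlib

/-- A run of the transition system from state `s`. -/
def IsRun {S : Type*} (step : S → S → Prop) (s : S) (ρ : ℕ → S) : Prop :=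
  ρ 0 = s ∧ ∀ n, step (ρ n) (ρ (n + 1))

/-- `s'` is reachable from `s`. -/
def ReachableFrom {S : Type*} (step : S → S → Prop) (s s' : S) : Prop :=
  ∃ ρ n, IsRun step s ρ ∧ ρ n = s'

/-- `s'` is reachable from some initial state in `Init`. -/
def Reachable {S : Type*} (step : S → S → Prop) (Init : Set S) (s' : S) : Prop :=
  ∃ s ∈ Init, ReachableFrom step s s'

/-- The system is terminating: every run from a reachable state visits a terminal state. -/
def Terminating {S : Type*} (step : S → S → Prop) (Term Init : Set S) : Prop :=
  ∀ s, Reachable step Init s → ∀ ρ, IsRun step s ρ → ∃ n, ρ n ∈ Term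

/-- The cost of a run: `c (ρ N) - c (ρ 0)` where `N` is the least index with `ρ N ∈ Term`. -/
noncomputable def RunCost {S : Type*} (Term : Set S) (c : S → ℤ) (ρ : ℕ → S) : ℤ :=
  c (ρ (sInf {n | ρ n ∈ Term})) - c (ρ 0)

/-- Potential function: sufficiency preservation and sufficiency on termination. -/
def IsPF {S : Type*} (step : S → S → Prop) (Term Init : Set S) (c : S → ℤ)
    (φ : S → ℝ) : Prop :=
  (∀ s s', Reachable step Init s → step s s' →
    φ s ≥ φ s' + ((c s' : ℝ) - (c s : ℝ))) ∧
  (∀ s, Reachable step Init s → s ∈ Term → φ s ≥ 0)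

/-- Anti-potential function: insufficiency preservation and insufficiency on termination. -/
def IsAntiPF {S : Type*} (step : S → S → Prop) (Term Init : Set S) (c : S → ℤ)
    (χ : S → ℝ) : Prop :=
  (∀ s s', Reachable step Init s → step s s' →
    χ s ≤ χ s' + ((c s' : ℝ) - (c s : ℝ))) ∧
  (∀ s, Reachable step Init s → s ∈ Term → χ s ≤ 0)

/-- `t` is a threshold for the DiffCost problem. -/
noncomputable def IsThreshold {Sn So X : Type*}
    (stepN : Sn → Sn → Prop) (TermN : Set Sn) (cN : Sn → ℤ)
    (stepO : So → So → Prop) (TermO : Set So) (cO : So → ℤ)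
    (Θ₀ : Set X) (ιN : X → Sn) (ιO : X → So) (t : ℝ) : Prop :=
  ∀ x ∈ Θ₀, ∀ ρN : ℕ → Sn, IsRun stepN (ιN x) ρN →
    ∀ ρO : ℕ → So, IsRun stepO (ιO x) ρO →
      ((RunCost TermN cN ρN : ℝ) - (RunCost TermO cO ρO : ℝ)) ≤ t

/-! The worst-case cost `s ↦ sup {Cost ρ | ρ a run from s}` is a potential function: prepending a
step `s → s'` to a run from `s'` gives a run from `s` whose cost is larger by `c s' - c s`.
Replacing `c` by `-c`, the best-case cost `s ↦ inf {Cost ρ | ρ a run from s}` is an anti-potential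
function. The runs of the two systems from a given input are chosen independently of each other,
so a threshold bounds the supremum for `T_new` minus the infimum for `T_old`. -/

section Runs

variable {S : Type*} {step : S → S → Prop} {Init : Set S} {s s' : S} {ρ : ℕ → S}

theorem exists_isRun (htotal : ∀ s, ∃ s', step s s') (s : S) : ∃ ρ, IsRun step s ρ := by
  choose next hnext using htotal
  refine ⟨fun n => next^[n] s, rfl, fun n => ?_⟩
  simpa only [Function.iterate_succ_apply'] using hnext _

/-- The sequence `s, ρ 0, ρ 1, …`, which prepends the state `s` to the run `ρ`. -/
def prependState (s : S) (ρ : ℕ → S) : ℕ → S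
  | 0 => s
  | n + 1 => ρ n

theorem IsRun.prepend (hρ : IsRun step s' ρ) (h : step s s') :
    IsRun step s (prependState s ρ) := by
  obtain ⟨rfl, hstep⟩ := hρ
  refine ⟨rfl, fun n => ?_⟩
  cases n with
  | zero => exact h
  | succ n => exact hstep n

theorem IsRun.reflTransGen (hρ : IsRun step s ρ) (n : ℕ) :
    Relation.ReflTransGen step s (ρ n) := by
  induction n with
  | zero => rw [hρ.1]
  | succ n ih => exact ih.tail (hρ.2 n)

theorem reachableFrom_iff_reflTransGen (htotal : ∀ s, ∃ s', step s s') :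
    ReachableFrom step s s' ↔ Relation.ReflTransGen step s s' := by
  constructor
  · rintro ⟨ρ, n, hρ, rfl⟩
    exact hρ.reflTransGen n
  · intro h
    induction h using Relation.ReflTransGen.head_induction_on with
    | refl =>
      obtain ⟨ρ, hρ⟩ := exists_isRun htotal s'
      exact ⟨ρ, 0, hρ, hρ.1⟩
    | head h _ ih =>
      obtain ⟨ρ, n, hρ, hn⟩ := ih
      exact ⟨_, n + 1, hρ.prepend h, hn⟩

theorem Reachable.tail (htotal : ∀ s, ∃ s', step s s') (hs : Reachable step Init s)
    (h : step s s') : Reachable step Init s' := by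
  obtain ⟨s₀, hs₀, hreach⟩ := hs
  rw [reachableFrom_iff_reflTransGen htotal] at hreach
  exact ⟨s₀, hs₀, (reachableFrom_iff_reflTransGen htotal).2 (hreach.tail h)⟩

end Runs

section RunCost

variable {S : Type*} {step : S → S → Prop} {Term : Set S} {s s' : S} {ρ : ℕ → S}

theorem runCost_eq_zero (c : S → ℤ) (h : ρ 0 ∈ Term) : RunCost Term c ρ = 0 := by
  have hzero : sInf {n | ρ n ∈ Term} = 0 := Nat.sInf_eq_zero.2 (Or.inl h)
  rw [RunCost, hzero, sub_self]

theorem runCost_neg (Term : Set S) (c : S → ℤ) (ρ : ℕ → S) :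
    RunCost Term (-c) ρ = -RunCost Term c ρ := by
  simp only [RunCost, Pi.neg_apply]
  ring

theorem sInf_prependState_mem (hs : s ∉ Term) (hvisit : ∃ n, ρ n ∈ Term) :
    sInf {n | prependState s ρ n ∈ Term} = sInf {n | ρ n ∈ Term} + 1 := by
  obtain ⟨n, hn⟩ := hvisit
  have hmem : sInf {n | prependState s ρ n ∈ Term} ∈ {n | prependState s ρ n ∈ Term} :=
    Nat.sInf_mem ⟨n + 1, hn⟩
  have hpos : 0 < sInf {n | prependState s ρ n ∈ Term} :=
    Nat.pos_of_ne_zero fun hzero => hs (by rwa [hzero] at hmem)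
  exact (Nat.sInf_add (p := fun n => prependState s ρ n ∈ Term) hpos).symm

theorem runCost_prependState_of_notMem (c : S → ℤ) (hs : s ∉ Term)
    (hvisit : ∃ n, ρ n ∈ Term) :
    RunCost Term c (prependState s ρ) = RunCost Term c ρ + (c (ρ 0) - c s) := by
  rw [RunCost, RunCost, sInf_prependState_mem hs hvisit]
  simp only [prependState]
  ring

theorem IsRun.runCost_prependState (c : S → ℤ)
    (hTerm : ∀ s ∈ Term, ∀ s', step s s' → s' = s) (hρ : IsRun step s' ρ) (h : step s s')
    (hvisit : ∃ n, ρ n ∈ Term) :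
    RunCost Term c (prependState s ρ) = RunCost Term c ρ + (c s' - c s) := by
  obtain ⟨rfl, -⟩ := hρ
  by_cases hs : s ∈ Term
  · have hloop : ρ 0 = s := hTerm s hs _ h
    rw [runCost_eq_zero c (ρ := prependState s ρ) hs, runCost_eq_zero c (by rwa [hloop]),
      hloop, sub_self, add_zero]
  · exact runCost_prependState_of_notMem c hs hvisit

end RunCost

section ExtremalCosts

variable {S : Type*} {step : S → S → Prop} {Term Init : Set S} {c : S → ℤ} {s s' : S}

/-- The set of costs of all runs from `s`, as real numbers so that `sSup` and `sInf` apply. -/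
def runCosts (step : S → S → Prop) (Term : Set S) (c : S → ℤ) (s : S) : Set ℝ :=
  {x | ∃ ρ : ℕ → S, IsRun step s ρ ∧ x = (RunCost Term c ρ : ℝ)}

theorem runCosts_nonempty (htotal : ∀ s, ∃ s', step s s') (s : S) :
    (runCosts step Term c s).Nonempty := by
  obtain ⟨ρ, hρ⟩ := exists_isRun htotal s
  exact ⟨_, ρ, hρ, rfl⟩

theorem runCosts_neg (step : S → S → Prop) (Term : Set S) (c : S → ℤ) (s : S) :
    runCosts step Term (-c) s = -runCosts step Term c s := by
  ext x
  simp only [runCosts, Set.mem_neg, Set.mem_ofPred_eq, runCost_neg, Int.cast_neg, neg_eq_iff_eq_neg]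

theorem runCosts_eq_singleton_zero (htotal : ∀ s, ∃ s', step s s') (hs : s ∈ Term) :
    runCosts step Term c s = {0} := by
  refine (runCosts_nonempty htotal s).subset_singleton_iff.1 ?_
  rintro _ ⟨ρ, ⟨rfl, -⟩, rfl⟩
  rw [runCost_eq_zero c hs, Int.cast_zero, Set.mem_singleton_iff]

theorem add_mem_runCosts (hTerm : ∀ s ∈ Term, ∀ s', step s s' → s' = s)
    (hvisit : ∀ ρ, IsRun step s' ρ → ∃ n, ρ n ∈ Term) (h : step s s') {x : ℝ}
    (hx : x ∈ runCosts step Term c s') :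
    x + ((c s' : ℝ) - (c s : ℝ)) ∈ runCosts step Term c s := by
  obtain ⟨ρ, hρ, rfl⟩ := hx
  refine ⟨prependState s ρ, hρ.prepend h, ?_⟩
  rw [hρ.runCost_prependState c hTerm h (hvisit ρ hρ)]
  push_cast
  rfl

/-- The worst-case cost of a run from `s`, with the junk value `0` if the costs of these runs are
not bounded above. -/
noncomputable def maxCost (step : S → S → Prop) (Term : Set S) (c : S → ℤ) (s : S) : ℝ :=
  sSup (runCosts step Term c s)

/-- The best-case cost of a run from `s`, with the junk value `0` if the costs of these runs are
not bounded below. -/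
noncomputable def minCost (step : S → S → Prop) (Term : Set S) (c : S → ℤ) (s : S) : ℝ :=
  sInf (runCosts step Term c s)

theorem maxCost_neg (step : S → S → Prop) (Term : Set S) (c : S → ℤ) :
    maxCost step Term (-c) = -minCost step Term c := by
  funext s
  rw [Pi.neg_apply, maxCost, minCost, runCosts_neg, Real.sInf_def, neg_neg]

theorem maxCost_eq_zero (htotal : ∀ s, ∃ s', step s s') (hs : s ∈ Term) :
    maxCost step Term c s = 0 := by
  rw [maxCost, runCosts_eq_singleton_zero htotal hs, csSup_singleton]

theorem maxCost_add_le (htotal : ∀ s, ∃ s', step s s')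
    (hTerm : ∀ s ∈ Term, ∀ s', step s s' → s' = s)
    (hvisit : ∀ ρ, IsRun step s' ρ → ∃ n, ρ n ∈ Term)
    (hbdd : BddAbove (runCosts step Term c s)) (h : step s s') :
    maxCost step Term c s' + ((c s' : ℝ) - (c s : ℝ)) ≤ maxCost step Term c s := by
  rw [← le_sub_iff_add_le]
  refine csSup_le (runCosts_nonempty htotal s') fun x hx => ?_
  rw [le_sub_iff_add_le]
  exact le_csSup hbdd (add_mem_runCosts hTerm hvisit h hx)

theorem isPF_maxCost (htotal : ∀ s, ∃ s', step s s')
    (hTerm : ∀ s ∈ Term, ∀ s', step s s' → s' = s) (hterminating : Terminating step Term Init)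
    (hbdd : ∀ s, Reachable step Init s → BddAbove (runCosts step Term c s)) :
    IsPF step Term Init c (maxCost step Term c) :=
  ⟨fun s s' hs h =>
    maxCost_add_le htotal hTerm (hterminating s' (hs.tail htotal h)) (hbdd s hs) h,
    fun _ _ hsT => (maxCost_eq_zero htotal hsT).ge⟩

theorem isPF_neg_iff {χ : S → ℝ} :
    IsPF step Term Init (-c) (-χ) ↔ IsAntiPF step Term Init c χ := by
  have hstep (s s' : S) : -χ s ≥ -χ s' + (-(c s' : ℝ) - -(c s : ℝ)) ↔
      χ s ≤ χ s' + ((c s' : ℝ) - (c s : ℝ)) := by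
    constructor <;> intro h <;> linarith
  simp only [IsPF, IsAntiPF, Pi.neg_apply, Int.cast_neg, hstep, ge_iff_le, neg_nonneg]

theorem isAntiPF_minCost (htotal : ∀ s, ∃ s', step s s')
    (hTerm : ∀ s ∈ Term, ∀ s', step s s' → s' = s) (hterminating : Terminating step Term Init)
    (hbdd : ∀ s, Reachable step Init s → BddBelow (runCosts step Term c s)) :
    IsAntiPF step Term Init c (minCost step Term c) := by
  rw [← isPF_neg_iff, ← maxCost_neg]
  refine isPF_maxCost htotal hTerm hterminating fun s hs => ?_
  rw [runCosts_neg]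
  exact (hbdd s hs).neg

end ExtremalCosts

theorem IsThreshold.maxCost_sub_minCost_le {Sn So X : Type*}
    {stepN : Sn → Sn → Prop} {TermN : Set Sn} {cN : Sn → ℤ}
    {stepO : So → So → Prop} {TermO : Set So} {cO : So → ℤ}
    {Θ₀ : Set X} {ιN : X → Sn} {ιO : X → So} {t : ℝ}
    (ht : IsThreshold stepN TermN cN stepO TermO cO Θ₀ ιN ιO t)
    (htotalN : ∀ s, ∃ s', stepN s s') (htotalO : ∀ s, ∃ s', stepO s s') {x : X} (hx : x ∈ Θ₀) :
    maxCost stepN TermN cN (ιN x) - minCost stepO TermO cO (ιO x) ≤ t := by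
  rw [sub_le_iff_le_add]
  refine csSup_le (runCosts_nonempty htotalN _) ?_
  rintro _ ⟨ρN, hρN, rfl⟩
  rw [← sub_le_iff_le_add']
  refine le_csInf (runCosts_nonempty htotalO _) ?_
  rintro _ ⟨ρO, hρO, rfl⟩
  exact sub_le_comm.1 (ht x hx ρN hρN ρO hρO)

/-- completeness of PFs and anti-PFs for the DiffCost problem. -/
theorem pf_antipf_complete_for_diffcost {Sn So X : Type*}
    (stepN : Sn → Sn → Prop) (TermN : Set Sn) (cN : Sn → ℤ)
    (stepO : So → So → Prop) (TermO : Set So) (cO : So → ℤ)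
    (Θ₀ : Set X) (ιN : X → Sn) (ιO : X → So)
    (htotalN : ∀ s : Sn, ∃ s', stepN s s')
    (htotalO : ∀ s : So, ∃ s', stepO s s')
    (hTermN : ∀ s ∈ TermN, ∀ s', stepN s s' → s' = s)
    (hTermO : ∀ s ∈ TermO, ∀ s', stepO s s' → s' = s)
    (hterminatingN : Terminating stepN TermN (ιN '' Θ₀))
    (hterminatingO : Terminating stepO TermO (ιO '' Θ₀))
    (hbddN : ∀ s, Reachable stepN (ιN '' Θ₀) s →
      BddAbove {x : ℝ | ∃ ρ : ℕ → Sn, IsRun stepN s ρ ∧ x = (RunCost TermN cN ρ : ℝ)})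
    (hbddO : ∀ s, Reachable stepO (ιO '' Θ₀) s →
      BddBelow {x : ℝ | ∃ ρ : ℕ → So, IsRun stepO s ρ ∧ x = (RunCost TermO cO ρ : ℝ)})
    (t : ℝ) (ht : IsThreshold stepN TermN cN stepO TermO cO Θ₀ ιN ιO t) :
    ∃ (φN : Sn → ℝ) (χO : So → ℝ),
      IsPF stepN TermN (ιN '' Θ₀) cN φN ∧
      IsAntiPF stepO TermO (ιO '' Θ₀) cO χO ∧
      ∀ x ∈ Θ₀, φN (ιN x) - χO (ιO x) ≤ t := by
  exact ⟨maxCost stepN TermN cN, minCost stepO TermO cO,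
    isPF_maxCost htotalN hTermN hterminatingN hbddN,
    isAntiPF_minCost htotalO hTermO hterminatingO hbddO,
    fun _ hx => ht.maxCost_sub_minCost_le htotalN htotalO hx⟩
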